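/- arXiv:2603.12370 — 3 statements merged into one kernel-verified Lean document; each statement's English description precedes it below -/
import Mathlib

section
/- Let λ > 0, ε > 0 and V ≠ 0. Define φ : ℝ → ℝ by φ(ξ) = V − 1 − (3ε²/(25λV)) · (tanh²(εξ/(10λV)) + 2 tanh(εξ/(10λV)) − 1). Set H = V − 1 + 6ε²/(25λV) and h = V − 1 − 6ε²/(25λV). Then φ satisfies, for every ξ ∈ ℝ, the integrated travelling-wave equation (1 − V) φ(ξ) + φ(ξ)²/2 + λ V φ''(ξ) − ε φ'(ξ) = −H·h/2. -/
/-!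
With `κ = ε / (5λV)`, the profile is `φ ξ = H - (H - h) * s ξ ^ 2`, where `s ξ = sigmoid (κ * ξ)`
solves the logistic equation `s' = κ s (1 - s)`. Squares of logistic functions solve the
travelling-wave Fisher equation `v'' = 5κ v' - 6κ² v (1 - v)` (the Ablowitz–Zeppetella wave), and
the affine change of variable from `v` to `φ` turns its zeros `0` and `1` into the equilibria `H`
and `h` of the integrated equation, which reads
`2λV (φ'' - 5κ φ') + (φ - H) (φ - h) = 0` because `H + h = 2 (V - 1)`.
-/

lemma one_add_tanh_eq_two_mul_sigmoid (x : ℝ) :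
    1 + Real.tanh x = 2 * Real.sigmoid (2 * x) := by
  have hexp : Real.exp (-(2 * x)) = Real.exp (-x) / Real.exp x := by
    rw [← Real.exp_sub]
    ring_nf
  rw [Real.tanh_eq, Real.sigmoid_def, hexp]
  field_simp
  ring

lemma hasDerivAt_sigmoid_const_mul (κ x : ℝ) :
    HasDerivAt (fun y ↦ Real.sigmoid (κ * y))
      (κ * Real.sigmoid (κ * x) * (1 - Real.sigmoid (κ * x))) x :=
  ((Real.hasDerivAt_sigmoid (κ * x)).comp x (hasDerivAt_const_mul κ)).congr_deriv (by ring)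

section TravellingWave

variable {𝕜 : Type*} [NontriviallyNormedField 𝕜]

lemma deriv_sq_of_logistic {κ : 𝕜} {s : 𝕜 → 𝕜}
    (hs : ∀ x, HasDerivAt s (κ * s x * (1 - s x)) x) :
    deriv (fun x ↦ s x ^ 2) = fun x ↦ 2 * κ * (s x ^ 2 * (1 - s x)) := by
  funext x
  exact (((hs x).fun_pow 2).congr_deriv (by push_cast; ring)).deriv

lemma fisher_sq_of_logistic {κ : 𝕜} {s : 𝕜 → 𝕜}
    (hs : ∀ x, HasDerivAt s (κ * s x * (1 - s x)) x) (x : 𝕜) :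
    iteratedDeriv 2 (fun y ↦ s y ^ 2) x
      = 5 * κ * deriv (fun y ↦ s y ^ 2) x - 6 * κ ^ 2 * (s x ^ 2 * (1 - s x ^ 2)) := by
  rw [iteratedDeriv_succ, iteratedDeriv_one, deriv_sq_of_logistic hs]
  refine HasDerivAt.deriv ?_
  refine ((((hs x).fun_pow 2).fun_mul ((hs x).const_sub 1)).const_mul (2 * κ)).congr_deriv ?_
  push_cast
  ring

lemma quadratic_travellingWave_of_fisher {v : 𝕜 → 𝕜} {α β μ H h x : 𝕜}
    (hv : iteratedDeriv 2 v x = α * deriv v x - β * (v x * (1 - v x)))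
    (hμ : 2 * μ * β = H - h) {φ : 𝕜 → 𝕜} (hφ : φ = fun y ↦ H - (H - h) * v y) :
    2 * μ * (iteratedDeriv 2 φ x - α * deriv φ x) + (φ x - H) * (φ x - h) = 0 := by
  have hderiv : deriv φ x = -((H - h) * deriv v x) := by
    rw [hφ, deriv_const_sub, deriv_const_mul_field]
  have hderiv₂ : iteratedDeriv 2 φ x = -((H - h) * iteratedDeriv 2 v x) := by
    rw [hφ, iteratedDeriv_const_sub two_pos, iteratedDeriv_neg, iteratedDeriv_const_mul_field]
  rw [hderiv, hderiv₂, hv, hφ]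
  linear_combination (H - h) * (v x * (1 - v x)) * hμ

end TravellingWave

/-- the explicit tanh profile satisfies the integrated
travelling-wave equation `(1 − V) φ + φ²/2 + λ V φ'' − ε φ' = −H·h/2`,
where `H = V − 1 + 6ε²/(25λV)` and `h = V − 1 − 6ε²/(25λV)`. -/
theorem gBBM_explicit_first_integral (lam eps V : ℝ) (hlam : 0 < lam) (heps : 0 < eps)
    (hV : V ≠ 0) (φ : ℝ → ℝ)
    (hφ : ∀ ξ : ℝ, φ ξ = V - 1 - (3 * eps ^ 2 / (25 * lam * V)) *
      (Real.tanh (eps * ξ / (10 * lam * V)) ^ 2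
        + 2 * Real.tanh (eps * ξ / (10 * lam * V)) - 1))
    (H h : ℝ)
    (hH : H = V - 1 + 6 * eps ^ 2 / (25 * lam * V))
    (hh : h = V - 1 - 6 * eps ^ 2 / (25 * lam * V)) :
    ∀ ξ : ℝ,
      (1 - V) * φ ξ + φ ξ ^ 2 / 2 + lam * V * iteratedDeriv 2 φ ξ - eps * deriv φ ξ
        = -(H * h) / 2 := by
  intro ξ
  set κ := eps / (5 * lam * V) with hκ
  have hprofile : φ = fun y ↦ H - (H - h) * Real.sigmoid (κ * y) ^ 2 := by
    funext y
    have htanh := one_add_tanh_eq_two_mul_sigmoid (eps * y / (10 * lam * V))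
    have hphase : 2 * (eps * y / (10 * lam * V)) = κ * y := by rw [hκ]; ring
    rw [hphase] at htanh
    rw [hφ, hH, hh, eq_sub_of_add_eq' htanh]
    ring
  have hscale : 2 * (lam * V) * (6 * κ ^ 2) = H - h := by
    rw [hH, hh, hκ]
    field
  have hspeed : eps = 5 * κ * (lam * V) := by
    rw [hκ]
    field
  have hsum : H + h = 2 * (V - 1) := by rw [hH, hh]; ring
  have hwave := quadratic_travellingWave_of_fisher
    (fisher_sq_of_logistic (hasDerivAt_sigmoid_const_mul κ) ξ) hscale hprofile
  linear_combination hwave / 2 - deriv φ ξ * hspeed + φ ξ / 2 * hsum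
end

section
/- Let λ > 0, ε > 0 and V ≠ 0. Define φ : ℝ → ℝ by φ(ξ) = V − 1 − (3ε²/(25λV)) · (tanh²(εξ/(10λV)) + 2 tanh(εξ/(10λV)) − 1). Then φ satisfies the third-order travelling-wave ODE (1 − V) φ'(ξ) + φ(ξ) φ'(ξ) + λ V φ'''(ξ) − ε φ''(ξ) = 0 for every ξ ∈ ℝ. -/
/-!
Since `t = tanh (k ξ)` satisfies the Riccati equation `t' = k (1 - t²)`, differentiating a
polynomial in `t` amounts to applying the derivation `D = k (1 - X²) d/dX` to that polynomial. Up
to an affine change the profile is `P = 1 - 2 X - X²`, and `D² P - 10 k D P + 6 k² P²` is constant.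
Applying `D` once more gives `D³ P - 10 k D² P + 12 k² P D P = 0`, which is the travelling-wave
equation for amplitude `12 β k²` and viscosity `ε = 10 β k`, where `β = λ V`.
-/

open Polynomial

section Autonomous

variable {𝕜 : Type*} [NontriviallyNormedField 𝕜] {q : 𝕜[X]} {t : 𝕜 → 𝕜}

theorem hasDerivAt_eval_comp_of_autonomous {x : 𝕜} (ht : HasDerivAt t (q.eval (t x)) x)
    (p : 𝕜[X]) :
    HasDerivAt (fun y ↦ p.eval (t y)) ((mkDerivation 𝕜 q p).eval (t x)) x := by
  refine ((p.hasDerivAt (t x)).comp x ht).congr_deriv ?_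
  simp [mkDerivation_apply]

theorem iteratedDeriv_eval_comp_of_autonomous (ht : ∀ x, HasDerivAt t (q.eval (t x)) x)
    (p : 𝕜[X]) (n : ℕ) :
    iteratedDeriv n (fun x ↦ p.eval (t x)) =
      fun x ↦ ((mkDerivation 𝕜 q)^[n] p).eval (t x) := by
  induction n with
  | zero => simp
  | succ n ih =>
    funext x
    rw [iteratedDeriv_succ, ih, Function.iterate_succ_apply']
    exact (hasDerivAt_eval_comp_of_autonomous (ht x) _).deriv

end Autonomous

section Riccati

variable {R : Type*} [CommRing R]

/-- The derivation `k (1 - X²) d/dX`, which is how differentiation acts on polynomials in a solution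
of the Riccati equation `t' = k (1 - t²)`. -/
noncomputable def riccatiDerivation (k : R) : Derivation R R[X] R[X] :=
  mkDerivation R (C k * (1 - X ^ 2))

variable (R) in
/-- The wave profile as a polynomial in `t`, with speed and amplitude normalized away. -/
noncomputable def riccatiProfile : R[X] :=
  1 - 2 * X - X ^ 2

theorem riccatiDerivation_riccatiProfile (k : R) :
    riccatiDerivation k (riccatiProfile R) = -(2 * C k * (1 - X) * (1 + X) ^ 2) := by
  simp only [riccatiDerivation, riccatiProfile, mkDerivation_apply, smul_eq_mul, derivative_sub,
    derivative_mul, derivative_pow, derivative_one, derivative_ofNat, derivative_X, Nat.cast_ofNat,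
    C_ofNat]
  ring

theorem riccatiDerivation_riccatiDerivation_riccatiProfile (k : R) :
    riccatiDerivation k (riccatiDerivation k (riccatiProfile R)) =
      -(2 * C k ^ 2 * (1 - X) * (1 + X) ^ 2 * (1 - 3 * X)) := by
  rw [riccatiDerivation_riccatiProfile]
  simp only [riccatiDerivation, mkDerivation_apply, smul_eq_mul, derivative_neg, derivative_mul,
    derivative_pow, derivative_add, derivative_sub, derivative_one, derivative_ofNat, derivative_C,
    derivative_X, Nat.cast_ofNat, C_ofNat]
  ring

theorem riccatiProfile_first_integral (k : R) :
    riccatiDerivation k (riccatiDerivation k (riccatiProfile R))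
      - (10 * k) • riccatiDerivation k (riccatiProfile R)
      + (6 * k ^ 2) • riccatiProfile R ^ 2 = C (24 * k ^ 2) := by
  rw [riccatiDerivation_riccatiDerivation_riccatiProfile, riccatiDerivation_riccatiProfile,
    riccatiProfile]
  simp only [smul_eq_C_mul, C_mul, C_pow, C_ofNat]
  ring

theorem riccatiProfile_third_order (k : R) :
    riccatiDerivation k (riccatiDerivation k (riccatiDerivation k (riccatiProfile R)))
      - (10 * k) • riccatiDerivation k (riccatiDerivation k (riccatiProfile R))
      + (12 * k ^ 2) • (riccatiProfile R * riccatiDerivation k (riccatiProfile R)) = 0 := by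
  have h := congrArg (riccatiDerivation k) (riccatiProfile_first_integral k)
  rw [derivation_C, map_add, map_sub, Derivation.map_smul, Derivation.map_smul,
    Derivation.leibniz_pow] at h
  rw [← h]
  simp only [smul_eq_C_mul, smul_eq_mul, nsmul_eq_mul, C_mul, C_pow, C_ofNat, Nat.cast_ofNat]
  ring

end Riccati

theorem kdvBurgers_travellingWave_of_riccati {𝕜 : Type*} [NontriviallyNormedField 𝕜]
    (a β k : 𝕜) {t φ : 𝕜 → 𝕜} (ht : ∀ x, HasDerivAt t (k * (1 - t x ^ 2)) x)
    (hφ : ∀ x, φ x = -a + 12 * β * k ^ 2 * (1 - 2 * t x - t x ^ 2)) (x : 𝕜) :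
    a * deriv φ x + φ x * deriv φ x + β * iteratedDeriv 3 φ x
      - 10 * β * k * iteratedDeriv 2 φ x = 0 := by
  let D := riccatiDerivation k
  let P := riccatiProfile 𝕜
  have hφP : φ = fun y ↦ (C (-a) + (12 * β * k ^ 2) • P).eval (t y) := by
    funext y
    simp [hφ, P, riccatiProfile]
  have hderiv (n : ℕ) :
      iteratedDeriv n φ x = (D^[n] (C (-a) + (12 * β * k ^ 2) • P)).eval (t x) := by
    rw [hφP, iteratedDeriv_eval_comp_of_autonomous (q := C k * (1 - X ^ 2)) (by simpa using ht)]
    rfl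
  have hD : D (C (-a) + (12 * β * k ^ 2) • P) = (12 * β * k ^ 2) • D P := by
    rw [map_add, derivation_C, D.map_smul, zero_add]
  have hODE := congrArg (eval (t x)) (riccatiProfile_third_order k)
  rw [← iteratedDeriv_one, hderiv 1, hderiv 2, hderiv 3, hφP]
  simp only [Function.iterate_succ_apply, Function.iterate_zero_apply, hD, D.map_smul]
  simp only [eval_add, eval_sub, eval_mul, eval_smul, eval_C, eval_zero, smul_eq_mul] at hODE ⊢
  linear_combination 12 * β ^ 2 * k ^ 2 * hODE

theorem hasDerivAt_tanh (x : ℝ) : HasDerivAt Real.tanh (1 - Real.tanh x ^ 2) x := by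
  have hcosh : Real.cosh x ≠ 0 := (Real.cosh_pos x).ne'
  have hquot := (Real.hasDerivAt_sinh x).div (Real.hasDerivAt_cosh x) hcosh
  rw [show Real.tanh = Real.sinh / Real.cosh from funext Real.tanh_eq_sinh_div_cosh]
  refine hquot.congr_deriv ?_
  rw [Pi.div_apply]
  field_simp

theorem hasDerivAt_tanh_const_mul (k x : ℝ) :
    HasDerivAt (fun y ↦ Real.tanh (k * y)) (k * (1 - Real.tanh (k * x) ^ 2)) x :=
  ((hasDerivAt_tanh (k * x)).comp x (hasDerivAt_const_mul k)).congr_deriv (mul_comm _ _)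

theorem gBBM_explicit_solves_ODE_general (a : ℝ) {β : ℝ} (hβ : β ≠ 0) (eps : ℝ) {φ : ℝ → ℝ}
    (hφ : ∀ ξ : ℝ, φ ξ = -a - 3 * eps ^ 2 / (25 * β) *
      (Real.tanh (eps * ξ / (10 * β)) ^ 2 + 2 * Real.tanh (eps * ξ / (10 * β)) - 1)) (ξ : ℝ) :
    a * deriv φ ξ + φ ξ * deriv φ ξ + β * iteratedDeriv 3 φ ξ - eps * iteratedDeriv 2 φ ξ = 0 := by
  let k := eps / (10 * β)
  have hvisc : 10 * β * k = eps := mul_div_cancel₀ eps (by positivity)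
  have hamp : 12 * β * k ^ 2 = 3 * eps ^ 2 / (25 * β) := by
    simp only [k]
    field
  have hprofile (x : ℝ) : φ x =
      -a + 12 * β * k ^ 2 * (1 - 2 * Real.tanh (k * x) - Real.tanh (k * x) ^ 2) := by
    rw [hφ, hamp, mul_div_right_comm eps x]
    ring
  rw [← hvisc]
  exact kdvBurgers_travellingWave_of_riccati a β k (hasDerivAt_tanh_const_mul k) hprofile ξ

/-- the explicit tanh profile satisfies the third-order
travelling-wave ODE `(1 − V) φ' + φ φ' + λ V φ''' − ε φ'' = 0` on all of `ℝ`. -/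
theorem gBBM_explicit_solves_ODE (lam eps V : ℝ) (hlam : 0 < lam) (heps : 0 < eps)
    (hV : V ≠ 0) (φ : ℝ → ℝ)
    (hφ : ∀ ξ : ℝ, φ ξ = V - 1 - (3 * eps ^ 2 / (25 * lam * V)) *
      (Real.tanh (eps * ξ / (10 * lam * V)) ^ 2
        + 2 * Real.tanh (eps * ξ / (10 * lam * V)) - 1)) :
    ∀ ξ : ℝ,
      (1 - V) * deriv φ ξ + φ ξ * deriv φ ξ
        + lam * V * iteratedDeriv 3 φ ξ - eps * iteratedDeriv 2 φ ξ = 0 := by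
  refine gBBM_explicit_solves_ODE_general (1 - V) (mul_ne_zero hlam.ne' hV) eps fun ξ ↦ ?_
  rw [hφ, neg_sub, mul_assoc 25, mul_assoc 10]
end

section
/- Let λ > 0, ε > 0, H, h ∈ ℝ with H ≠ h, set V = 1 + (H + h)/2 and assume V ≠ 0. Then at least one of the two quantities D_H = (ε/(2λV))² + (V − 1 − H)/(λV) and D_h = (ε/(2λV))² + (V − 1 − h)/(λV) is negative if and only if |(H + 1)² − (h + 1)²| > ε²/λ. Consequently, the linearization at one of the fixed points H, h has non-real characteristic roots (oscillatory shock) exactly when |(H + 1)² − (h + 1)²| > ε²/λ, and both fixed points have real characteristic roots (monotonic shock) exactly when |(H + 1)² − (h + 1)²| ≤ ε²/λ (with equality the borderline case). -/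
/-! Up to the positive factor `4 λ V²`, the discriminant at `u` is `ε²/λ - 4 V (u + 1 - V)`. The two
fixed points are mirror images in `V - 1`, so their values of `4 V (u + 1 - V)` are opposite, namely
`±((H + 1)² - (h + 1)²)`; both discriminants are nonnegative exactly when the larger of these two
values, an absolute value, is at most `ε²/λ`. -/

section CharDiscrim

variable {K : Type*} [Field K]

/-- The quantity under the square root in the characteristic roots `k±` of the linearization at the
fixed point `u`: a quarter of the discriminant of the monic equation
`k² - ε/(λV) k - (V - 1 - u)/(λV) = 0`. It decides between a focus and real roots. -/
def charDiscrim (lam eps V u : K) : K :=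
  (eps / (2 * lam * V)) ^ 2 + (V - 1 - u) / (lam * V)

theorem four_mul_mul_add_one_sub_eq_sq_sub_sq [NeZero (2 : K)] {H h V : K}
    (hV : V = 1 + (H + h) / 2) :
    4 * V * (H + 1 - V) = (H + 1) ^ 2 - (h + 1) ^ 2 := by
  rw [hV]
  field_simp
  ring

variable [LinearOrder K] [IsStrictOrderedRing K]

theorem charDiscrim_nonneg_iff {lam V : K} (hlam : 0 < lam) (hV0 : V ≠ 0) (eps u : K) :
    0 ≤ charDiscrim lam eps V u ↔ 4 * V * (u + 1 - V) ≤ eps ^ 2 / lam := by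
  have charDiscrim_eq : charDiscrim lam eps V u =
      (eps ^ 2 / lam - 4 * V * (u + 1 - V)) / (4 * lam * V ^ 2) := by
    unfold charDiscrim
    field_simp
    ring
  have factor_pos : 0 < 4 * lam * V ^ 2 := by positivity
  rw [charDiscrim_eq, le_div_iff₀ factor_pos, zero_mul, sub_nonneg]

theorem charDiscrim_nonneg_and_nonneg_iff {lam V H h : K} (hlam : 0 < lam)
    (hV : V = 1 + (H + h) / 2) (hV0 : V ≠ 0) (eps : K) :
    (0 ≤ charDiscrim lam eps V H ∧ 0 ≤ charDiscrim lam eps V h) ↔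
      |(H + 1) ^ 2 - (h + 1) ^ 2| ≤ eps ^ 2 / lam := by
  have hV_swap : V = 1 + (h + H) / 2 := by rw [hV, add_comm H h]
  rw [charDiscrim_nonneg_iff hlam hV0, charDiscrim_nonneg_iff hlam hV0,
    four_mul_mul_add_one_sub_eq_sq_sub_sq hV, four_mul_mul_add_one_sub_eq_sq_sub_sq hV_swap,
    abs_le', neg_sub]

theorem gBBM_oscillatory_criterion_general {lam V H h : K} (hlam : 0 < lam)
    (hV : V = 1 + (H + h) / 2) (hV0 : V ≠ 0) (eps : K) :
    ((charDiscrim lam eps V H < 0 ∨ charDiscrim lam eps V h < 0) ↔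
        eps ^ 2 / lam < |(H + 1) ^ 2 - (h + 1) ^ 2|)
      ∧ ((0 ≤ charDiscrim lam eps V H ∧ 0 ≤ charDiscrim lam eps V h) ↔
        |(H + 1) ^ 2 - (h + 1) ^ 2| ≤ eps ^ 2 / lam) := by
  have monotonic_iff := charDiscrim_nonneg_and_nonneg_iff hlam hV hV0 eps
  refine ⟨?_, monotonic_iff⟩
  rw [← not_le, ← not_le, ← not_and_or, monotonic_iff, not_le]

end CharDiscrim

/-- with `V = 1 + (H + h)/2 ≠ 0` and `H ≠ h`, setting
`D_H = (ε/(2λV))² + (V − 1 − H)/(λV)` and `D_h = (ε/(2λV))² + (V − 1 − h)/(λV)`,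
at least one of `D_H`, `D_h` is negative (oscillatory shock: non-real
characteristic roots at one fixed point) iff `|(H + 1)² − (h + 1)²| > ε²/λ`,
and both are nonnegative (monotonic shock: all roots real) iff
`|(H + 1)² − (h + 1)²| ≤ ε²/λ`. -/
theorem gBBM_oscillatory_criterion (lam eps H h V : ℝ) (hlam : 0 < lam) (heps : 0 < eps)
    (hHh : H ≠ h) (hV : V = 1 + (H + h) / 2) (hV0 : V ≠ 0)
    (DH Dh : ℝ)
    (hDH : DH = (eps / (2 * lam * V)) ^ 2 + (V - 1 - H) / (lam * V))
    (hDh : Dh = (eps / (2 * lam * V)) ^ 2 + (V - 1 - h) / (lam * V)) :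
    ((DH < 0 ∨ Dh < 0) ↔ eps ^ 2 / lam < |(H + 1) ^ 2 - (h + 1) ^ 2|)
    ∧ ((0 ≤ DH ∧ 0 ≤ Dh) ↔ |(H + 1) ^ 2 - (h + 1) ^ 2| ≤ eps ^ 2 / lam) := by
  subst hDH hDh
  exact gBBM_oscillatory_criterion_general hlam hV hV0 eps
end
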